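/- Let T be a positive natural number and for each i ∈ Fin T let μᵢ and νᵢ be probability measures on a measurable space Ωᵢ. Let α > 1, and for each i let εᵢ ≥ 0 and δᵢ ∈ (0,1). Suppose for each i there are measurable events Eᵢ, Eᵢ' ⊆ Ωᵢ with μᵢ(Eᵢ) > 1−δᵢ, νᵢ(Eᵢ') > 1−δᵢ, μᵢ(·|Eᵢ) ≪ νᵢ(·|Eᵢ'), and D_α(μᵢ(·|Eᵢ) ‖ νᵢ(·|Eᵢ')) ≤ εᵢ. Let μ = ⨂ᵢ μᵢ and ν = ⨂ᵢ νᵢ be the product measures on ∏ᵢ Ωᵢ. Then there exist measurable events E, E' ⊆ ∏ᵢ Ωᵢ (namely the products ∏ᵢ Eᵢ and ∏ᵢ Eᵢ') with μ(E) > 1 − ∑ᵢ δᵢ, ν(E') > 1 − ∑ᵢ δᵢ, and D_α(μ(·|E) ‖ ν(·|E')) ≤ ∑ᵢ εᵢ. (This T-fold composition of approximate RDP is the measure-level content of the composition part of the paper's Theorem 2: the composition of T iterations, each δ_t-approximate-(α, εᵢ(α))-RDP, is T·δ_t-approximate-(α, ∑ᵢ εᵢ(α))-RDP.) -/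

import Mathlib

open MeasureTheory ProbabilityTheory Real
open scoped ENNReal ProbabilityTheory

/-- Rényi divergence of order `α`:
`D_α(μ‖ν) = (α−1)⁻¹ · log ∫ (dμ/dν)^α dν`. -/
noncomputable def renyiDiv {Ω : Type*} [MeasurableSpace Ω] (α : ℝ) (μ ν : Measure Ω) : ℝ :=
  (α - 1)⁻¹ * Real.log ((∫⁻ x, μ.rnDeriv ν x ^ α ∂ν).toReal)

/-! Radon–Nikodym derivatives and conditioning both commute with finite products, so by Tonelli
`∫ (dμ/dν)^α dν` is multiplicative over products and its logarithm is additive. The mass lost by a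
product event is controlled by the Weierstrass inequality `1 - ∑ (1 - aᵢ) ≤ ∏ aᵢ` on `[0, 1]`. -/

theorem lintegral_fin_prod_eq_prod {n : ℕ} {Ω : Fin n → Type*} [∀ i, MeasurableSpace (Ω i)]
    (μ : ∀ i, Measure (Ω i)) [∀ i, SigmaFinite (μ i)] {f : ∀ i, Ω i → ℝ≥0∞}
    (hf : ∀ i, AEMeasurable (f i) (μ i)) :
    ∫⁻ x, ∏ i, f i (x i) ∂Measure.pi μ = ∏ i, ∫⁻ x, f i x ∂μ i := by
  induction n with
  | zero => simp
  | succ n ih =>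
    have hf_tail : AEMeasurable (fun x : ∀ i : Fin n, Ω i.succ ↦ ∏ i, f i.succ (x i))
        (Measure.pi fun i ↦ μ i.succ) :=
      Finset.aemeasurable_fun_prod _ fun i _ ↦
        (hf i.succ).comp_quasiMeasurePreserving (Measure.quasiMeasurePreserving_eval _ i)
    calc ∫⁻ x, ∏ i, f i (x i) ∂Measure.pi μ
      _ = ∫⁻ x, f 0 (x 0) * ∏ i : Fin n, f i.succ (x i.succ) ∂Measure.pi μ := by
        simp_rw [Fin.prod_univ_succ]
      _ = ∫⁻ z, f 0 z.1 * ∏ i : Fin n, f i.succ (z.2 i)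
            ∂(μ 0).prod (Measure.pi fun i ↦ μ i.succ) :=
        (measurePreserving_piFinSuccAbove μ 0).lintegral_comp_emb
          (MeasurableEquiv.measurableEmbedding _) fun z ↦ f 0 z.1 * ∏ i : Fin n, f i.succ (z.2 i)
      _ = ∏ i, ∫⁻ x, f i x ∂μ i := by
        rw [lintegral_prod_mul (hf 0) hf_tail, ih _ fun i ↦ hf i.succ, Fin.prod_univ_succ]

theorem one_sub_sum_one_sub_le_prod {ι R : Type*} [CommRing R] [LinearOrder R]
    [IsStrictOrderedRing R] (s : Finset ι) {a : ι → R} (ha₀ : ∀ i ∈ s, 0 ≤ a i)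
    (ha₁ : ∀ i ∈ s, a i ≤ 1) :
    1 - ∑ i ∈ s, (1 - a i) ≤ ∏ i ∈ s, a i := by
  induction s using Finset.cons_induction with
  | empty => simp
  | cons i s hi ih =>
    rw [Finset.forall_mem_cons] at ha₀ ha₁
    rw [Finset.sum_cons, Finset.prod_cons]
    have hprod : ∏ j ∈ s, a j ≤ 1 := Finset.prod_le_one ha₀.2 ha₁.2
    linarith [ih ha₀.2 ha₁.2, mul_nonneg (sub_nonneg.2 ha₁.1) (sub_nonneg.2 hprod)]

section Pi

variable {ι : Type*} [Fintype ι] {Ω : ι → Type*} [∀ i, MeasurableSpace (Ω i)]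

theorem lintegral_fintype_prod_eq_prod (μ : ∀ i, Measure (Ω i)) [∀ i, SigmaFinite (μ i)]
    {f : ∀ i, Ω i → ℝ≥0∞} (hf : ∀ i, AEMeasurable (f i) (μ i)) :
    ∫⁻ x, ∏ i, f i (x i) ∂Measure.pi μ = ∏ i, ∫⁻ x, f i x ∂μ i := by
  let e := (Fintype.equivFin ι).symm
  rw [← (measurePreserving_piCongrLeft μ e).map_eq, lintegral_map_equiv]
  simp_rw [← e.prod_comp, MeasurableEquiv.coe_piCongrLeft, Equiv.piCongrLeft_apply_apply]
  exact lintegral_fin_prod_eq_prod _ fun i ↦ hf (e i)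

theorem pi_withDensity (ν : ∀ i, Measure (Ω i)) [∀ i, SigmaFinite (ν i)] {f : ∀ i, Ω i → ℝ≥0∞}
    (hf : ∀ i, AEMeasurable (f i) (ν i)) [∀ i, SigmaFinite ((ν i).withDensity (f i))] :
    Measure.pi (fun i ↦ (ν i).withDensity (f i)) =
      (Measure.pi ν).withDensity fun x ↦ ∏ i, f i (x i) := by
  refine Measure.pi_eq fun s hs ↦ ?_
  simp_rw [withDensity_apply _ (MeasurableSet.univ_pi hs), withDensity_apply _ (hs _),
    Measure.restrict_pi_pi]
  exact lintegral_fintype_prod_eq_prod _ fun i ↦ (hf i).restrict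

theorem rnDeriv_pi {μ ν : ∀ i, Measure (Ω i)} [∀ i, SigmaFinite (μ i)] [∀ i, SigmaFinite (ν i)]
    (hμν : ∀ i, μ i ≪ ν i) :
    (Measure.pi μ).rnDeriv (Measure.pi ν) =ᵐ[Measure.pi ν]
      fun x ↦ ∏ i, (μ i).rnDeriv (ν i) (x i) := by
  have hμ : Measure.pi μ =
      (Measure.pi ν).withDensity fun x ↦ ∏ i, (μ i).rnDeriv (ν i) (x i) := by
    rw [← pi_withDensity ν fun i ↦ (Measure.measurable_rnDeriv (μ i) (ν i)).aemeasurable]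
    simp_rw [Measure.withDensity_rnDeriv_eq _ _ (hμν _)]
  rw [hμ]
  exact Measure.rnDeriv_withDensity _ (by fun_prop)

theorem cond_pi (μ : ∀ i, Measure (Ω i)) [∀ i, IsFiniteMeasure (μ i)] {E : ∀ i, Set (Ω i)}
    (hE : ∀ i, MeasurableSet (E i)) :
    (Measure.pi μ)[|Set.univ.pi E] = Measure.pi fun i ↦ (μ i)[|E i] := by
  refine (Measure.pi_eq fun s _ ↦ ?_).symm
  simp_rw [cond_apply (MeasurableSet.univ_pi hE), cond_apply (hE _), ← Set.pi_inter_distrib,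
    Measure.pi_pi, Finset.prod_mul_distrib]
  rw [ENNReal.prod_inv_distrib fun i _ j _ _ ↦ Or.inr (measure_ne_top _ _)]

theorem ofReal_one_sub_sum_lt_pi [Nonempty ι] (μ : ∀ i, Measure (Ω i))
    [∀ i, IsProbabilityMeasure (μ i)] {δ : ι → ℝ} {E : ∀ i, Set (Ω i)}
    (hE : ∀ i, ENNReal.ofReal (1 - δ i) < μ i (E i)) :
    ENNReal.ofReal (1 - ∑ i, δ i) < Measure.pi μ (Set.univ.pi E) := by
  simp_rw [← ofReal_measureReal (measure_ne_top _ _), ENNReal.ofReal_lt_ofReal_iff'] at hE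
  rw [Measure.pi_pi]
  simp_rw [← ofReal_measureReal (measure_ne_top (μ _) _)]
  rw [← ENNReal.ofReal_prod_of_nonneg fun i _ ↦ measureReal_nonneg,
    ENNReal.ofReal_lt_ofReal_iff (Finset.prod_pos fun i _ ↦ (hE i).2)]
  calc 1 - ∑ i, δ i
    _ < 1 - ∑ i, (1 - (μ i).real (E i)) :=
      sub_lt_sub_left (Finset.sum_lt_sum_of_nonempty Finset.univ_nonempty
        fun i _ ↦ sub_lt_comm.1 (hE i).1) 1
    _ ≤ ∏ i, (μ i).real (E i) :=
      one_sub_sum_one_sub_le_prod _ (fun i _ ↦ measureReal_nonneg) fun i _ ↦ measureReal_le_one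

end Pi

/-- The Hellinger integral `∫ (dμ/dν)^α dν` of order `α`, through which `renyiDiv α μ ν` is
defined. It is `ℝ≥0∞`-valued, so that an infinite divergence of order `α > 1` shows up as the value
`∞`, whereas `renyiDiv` then takes the junk value `0`. -/
noncomputable def hellingerIntegral {Ω : Type*} [MeasurableSpace Ω] (α : ℝ) (μ ν : Measure Ω) :
    ℝ≥0∞ :=
  ∫⁻ x, μ.rnDeriv ν x ^ α ∂ν

section Renyi

variable {Ω : Type*} [MeasurableSpace Ω] {μ ν : Measure Ω} {α β : ℝ}

theorem renyiDiv_eq_log_hellingerIntegral (α : ℝ) (μ ν : Measure Ω) :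
    renyiDiv α μ ν = (α - 1)⁻¹ * log (hellingerIntegral α μ ν).toReal :=
  rfl

theorem hellingerIntegral_ne_zero [SigmaFinite μ] [μ.HaveLebesgueDecomposition ν] [NeZero μ]
    (hμν : μ ≪ ν) : hellingerIntegral α μ ν ≠ 0 := by
  intro h
  have hrpow : (fun x ↦ μ.rnDeriv ν x ^ α) =ᵐ[ν] 0 :=
    (lintegral_eq_zero_iff ((μ.measurable_rnDeriv ν).pow_const α)).1 h
  have hsing : μ ⟂ₘ ν := by
    rw [← Measure.rnDeriv_eq_zero]
    filter_upwards [hrpow, μ.rnDeriv_ne_top ν] with x hx hx_top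
    exact ((ENNReal.rpow_eq_zero_iff.1 hx).resolve_right fun h_top ↦ hx_top h_top.1).1
  exact NeZero.ne μ (Measure.eq_zero_of_absolutelyContinuous_of_mutuallySingular hμν hsing)

theorem hellingerIntegral_one [μ.HaveLebesgueDecomposition ν] (hμν : μ ≪ ν) :
    hellingerIntegral 1 μ ν = μ Set.univ := by
  simp_rw [hellingerIntegral, ENNReal.rpow_one, Measure.lintegral_rnDeriv hμν]

theorem hellingerIntegral_rpow_inv_le [IsProbabilityMeasure ν] (hα : 0 < α) (hαβ : α ≤ β) :
    hellingerIntegral α μ ν ^ α⁻¹ ≤ hellingerIntegral β μ ν ^ β⁻¹ := by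
  simpa only [hellingerIntegral, eLpNorm', enorm_eq_self, one_div] using
    eLpNorm'_le_eLpNorm'_of_exponent_le hα hαβ ν (μ.measurable_rnDeriv ν).aestronglyMeasurable

variable [IsProbabilityMeasure μ] [IsProbabilityMeasure ν]

theorem one_le_hellingerIntegral (hμν : μ ≪ ν) (hα : 1 ≤ α) : 1 ≤ hellingerIntegral α μ ν := by
  have h := hellingerIntegral_rpow_inv_le (μ := μ) (ν := ν) one_pos hα
  rwa [hellingerIntegral_one hμν, measure_univ, ENNReal.one_rpow,
    ENNReal.le_rpow_inv_iff (by positivity), ENNReal.one_rpow] at h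

theorem hellingerIntegral_le_one (hμν : μ ≪ ν) (hα₀ : 0 < α) (hα₁ : α ≤ 1) :
    hellingerIntegral α μ ν ≤ 1 := by
  have h := hellingerIntegral_rpow_inv_le (μ := μ) (ν := ν) hα₀ hα₁
  rwa [hellingerIntegral_one hμν, measure_univ, ENNReal.one_rpow,
    ENNReal.rpow_inv_le_iff hα₀, ENNReal.one_rpow] at h

theorem renyiDiv_nonneg (hμν : μ ≪ ν) (hα₀ : 0 < α) (hα₁ : α ≠ 1) : 0 ≤ renyiDiv α μ ν := by
  rw [renyiDiv_eq_log_hellingerIntegral]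
  rcases hα₁.lt_or_gt with hα | hα
  · refine mul_nonneg_of_nonpos_of_nonpos (inv_nonpos.2 (sub_nonpos.2 hα.le)) ?_
    exact log_nonpos ENNReal.toReal_nonneg
      (ENNReal.toReal_le_of_le_ofReal one_pos.le
        (by simpa using hellingerIntegral_le_one hμν hα₀ hα.le))
  · refine mul_nonneg (inv_nonneg.2 (sub_nonneg.2 hα.le)) ?_
    by_cases h_top : hellingerIntegral α μ ν = ∞
    · simp [h_top]
    · exact log_nonneg (by
        simpa using ENNReal.toReal_mono h_top (one_le_hellingerIntegral hμν hα.le))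

end Renyi

section RenyiPi

variable {ι : Type*} [Fintype ι] {Ω : ι → Type*} [∀ i, MeasurableSpace (Ω i)]
  {μ ν : ∀ i, Measure (Ω i)} {α : ℝ}

theorem hellingerIntegral_pi [∀ i, SigmaFinite (μ i)] [∀ i, SigmaFinite (ν i)]
    (hμν : ∀ i, μ i ≪ ν i) (hα : 0 ≤ α) :
    hellingerIntegral α (Measure.pi μ) (Measure.pi ν) = ∏ i, hellingerIntegral α (μ i) (ν i) := by
  calc hellingerIntegral α (Measure.pi μ) (Measure.pi ν)
    _ = ∫⁻ x, ∏ i, (μ i).rnDeriv (ν i) (x i) ^ α ∂Measure.pi ν := by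
      refine lintegral_congr_ae ?_
      filter_upwards [rnDeriv_pi hμν] with x hx
      rw [hx, ENNReal.prod_rpow_of_nonneg hα]
    _ = ∏ i, hellingerIntegral α (μ i) (ν i) :=
      lintegral_fintype_prod_eq_prod ν fun i ↦
        ((Measure.measurable_rnDeriv (μ i) (ν i)).pow_const α).aemeasurable

theorem renyiDiv_pi [∀ i, SigmaFinite (μ i)] [∀ i, SigmaFinite (ν i)] [∀ i, NeZero (μ i)]
    (hμν : ∀ i, μ i ≪ ν i) (hα : 0 ≤ α) (h_top : ∀ i, hellingerIntegral α (μ i) (ν i) ≠ ∞) :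
    renyiDiv α (Measure.pi μ) (Measure.pi ν) = ∑ i, renyiDiv α (μ i) (ν i) := by
  simp_rw [renyiDiv_eq_log_hellingerIntegral]
  rw [hellingerIntegral_pi hμν hα, ENNReal.toReal_prod, log_prod fun i _ ↦
    ENNReal.toReal_ne_zero.2 ⟨hellingerIntegral_ne_zero (hμν i), h_top i⟩, Finset.mul_sum]

theorem renyiDiv_pi_le [∀ i, IsProbabilityMeasure (μ i)] [∀ i, IsProbabilityMeasure (ν i)]
    (hμν : ∀ i, μ i ≪ ν i) (hα₀ : 0 < α) (hα₁ : α ≠ 1) :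
    renyiDiv α (Measure.pi μ) (Measure.pi ν) ≤ ∑ i, renyiDiv α (μ i) (ν i) := by
  by_cases h_top : ∀ i, hellingerIntegral α (μ i) (ν i) ≠ ∞
  · exact (renyiDiv_pi hμν hα₀.le h_top).le
  · -- An infinite factor turns the left-hand side into the junk value `log 0 = 0`.
    push Not at h_top
    obtain ⟨i, hi⟩ := h_top
    have h_zero : renyiDiv α (Measure.pi μ) (Measure.pi ν) = 0 := by
      rw [renyiDiv_eq_log_hellingerIntegral, hellingerIntegral_pi hμν hα₀.le, ENNReal.toReal_prod,
        Finset.prod_eq_zero (Finset.mem_univ i) (by rw [hi, ENNReal.toReal_top]), log_zero,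
        mul_zero]
    rw [h_zero]
    exact Finset.sum_nonneg fun i _ ↦ renyiDiv_nonneg (hμν i) hα₀ hα₁

end RenyiPi

theorem approx_rdp_composition_general {ι : Type*} [Fintype ι] [Nonempty ι]
    {Ω : ι → Type*} [∀ i, MeasurableSpace (Ω i)] (μ ν : ∀ i, Measure (Ω i))
    [∀ i, IsProbabilityMeasure (μ i)] [∀ i, IsProbabilityMeasure (ν i)]
    {α : ℝ} (hα₀ : 0 < α) (hα₁ : α ≠ 1) {ε δ : ι → ℝ} {E E' : ∀ i, Set (Ω i)}
    (hE : ∀ i, MeasurableSet (E i)) (hE' : ∀ i, MeasurableSet (E' i))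
    (hμE : ∀ i, ENNReal.ofReal (1 - δ i) < μ i (E i))
    (hνE' : ∀ i, ENNReal.ofReal (1 - δ i) < ν i (E' i))
    (hac : ∀ i, (μ i)[|E i] ≪ (ν i)[|E' i])
    (hD : ∀ i, renyiDiv α ((μ i)[|E i]) ((ν i)[|E' i]) ≤ ε i) :
    ∃ EE EE' : Set (∀ i, Ω i),
      EE = Set.pi Set.univ E ∧ EE' = Set.pi Set.univ E' ∧
      MeasurableSet EE ∧ MeasurableSet EE' ∧
      ENNReal.ofReal (1 - ∑ i, δ i) < (Measure.pi μ) EE ∧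
      ENNReal.ofReal (1 - ∑ i, δ i) < (Measure.pi ν) EE' ∧
      renyiDiv α ((Measure.pi μ)[|EE]) ((Measure.pi ν)[|EE']) ≤ ∑ i, ε i := by
  have hμ_prob : ∀ i, IsProbabilityMeasure ((μ i)[|E i]) := fun i ↦
    cond_isProbabilityMeasure (ne_bot_of_gt (hμE i))
  have hν_prob : ∀ i, IsProbabilityMeasure ((ν i)[|E' i]) := fun i ↦
    cond_isProbabilityMeasure (ne_bot_of_gt (hνE' i))
  refine ⟨_, _, rfl, rfl, .univ_pi hE, .univ_pi hE', ofReal_one_sub_sum_lt_pi μ hμE,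
    ofReal_one_sub_sum_lt_pi ν hνE', ?_⟩
  rw [cond_pi μ hE, cond_pi ν hE']
  exact (renyiDiv_pi_le hac hα₀ hα₁).trans (Finset.sum_le_sum fun i _ ↦ hD i)

/-- `T`-fold composition of approximate RDP (measure-level form of the composition part of
the paper's Theorem 2): the product events `∏ᵢ Eᵢ` and `∏ᵢ Eᵢ'` witness
`(∑ᵢ δᵢ)`-approximate-`(α, ∑ᵢ εᵢ)`-RDP for the product measures. -/
theorem approx_rdp_composition (T : ℕ) (hT : 0 < T)
    {Ω : Fin T → Type*} [∀ i, MeasurableSpace (Ω i)]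
    (μ ν : ∀ i, Measure (Ω i))
    [∀ i, IsProbabilityMeasure (μ i)] [∀ i, IsProbabilityMeasure (ν i)]
    (α : ℝ) (hα : 1 < α) (ε δ : Fin T → ℝ)
    (hε : ∀ i, 0 ≤ ε i) (hδ : ∀ i, δ i ∈ Set.Ioo (0 : ℝ) 1)
    (E E' : ∀ i, Set (Ω i))
    (hE : ∀ i, MeasurableSet (E i)) (hE' : ∀ i, MeasurableSet (E' i))
    (hμE : ∀ i, ENNReal.ofReal (1 - δ i) < μ i (E i))
    (hνE' : ∀ i, ENNReal.ofReal (1 - δ i) < ν i (E' i))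
    (hac : ∀ i, (μ i)[|E i] ≪ (ν i)[|E' i])
    (hD : ∀ i, renyiDiv α ((μ i)[|E i]) ((ν i)[|E' i]) ≤ ε i) :
    ∃ EE EE' : Set (∀ i, Ω i),
      EE = Set.pi Set.univ E ∧ EE' = Set.pi Set.univ E' ∧
      MeasurableSet EE ∧ MeasurableSet EE' ∧
      ENNReal.ofReal (1 - ∑ i, δ i) < (Measure.pi μ) EE ∧
      ENNReal.ofReal (1 - ∑ i, δ i) < (Measure.pi ν) EE' ∧
      renyiDiv α ((Measure.pi μ)[|EE]) ((Measure.pi ν)[|EE']) ≤ ∑ i, ε i := by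
  have : NeZero T := ⟨hT.ne'⟩
  exact approx_rdp_composition_general μ ν (one_pos.trans hα) hα.ne' hE hE' hμE hνE' hac hD
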